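/- arXiv:2107.06506 — 3 statements merged into one kernel-verified Lean document; each statement's English description precedes it below -/
import Mathlib

section
/- For all real numbers δ₁, d, T with 0 ≤ δ₁ ≤ d < 9/2 and T ≥ 5/7, one has 0 < E(T, δ₁) ≤ E(T, d). -/
open Real

/-- The function `E(T,d)` of Bennett–Martin–O'Bryant–Rechnitzer. -/
noncomputable def Efun (T d : ℝ) : ℝ :=
  (2 * T / 3) / ((2 * d + 17) ^ 2 + 4 * T ^ 2)
    + (2 * T / 3) / ((-2 * d + 17) ^ 2 + 4 * T ^ 2)
    - (4 * T / 3) / (17 ^ 2 + 4 * T ^ 2)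
    + (T / 2) * Real.log (1 + 17 ^ 2 / (4 * T ^ 2))
    - (T / 4) * Real.log (1 + (2 * d + 17) ^ 2 / (4 * T ^ 2))
    - (T / 4) * Real.log (1 + (-2 * d + 17) ^ 2 / (4 * T ^ 2))
    + ((8 + 6 * π) / 45) / ((2 * d + 17) ^ 2 + 4 * T ^ 2) ^ ((3 : ℝ) / 2)
    + ((8 + 6 * π) / 45) / ((-2 * d + 17) ^ 2 + 4 * T ^ 2) ^ ((3 : ℝ) / 2)
    + (2 * (8 + 6 * π) / 45) / (17 ^ 2 + 4 * T ^ 2) ^ ((3 : ℝ) / 2)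
    + ∑ k ∈ Finset.range 4,
        (2 * Real.arctan ((1 + 4 * (k : ℝ)) / (2 * T))
          - Real.arctan ((2 * d + 1 + 4 * (k : ℝ)) / (2 * T))
          - Real.arctan ((-2 * d + 1 + 4 * (k : ℝ)) / (2 * T)))
    + ((2 * d + 15) / 4) * Real.arctan ((2 * d + 17) / (2 * T))
    + ((-2 * d + 15) / 4) * Real.arctan ((-2 * d + 17) / (2 * T))
    - (15 / 2) * Real.arctan (17 / (2 * T))


/-- The part of `E` depending on `s = 17 ± 2d`. -/
noncomputable def Ff (T s : ℝ) : ℝ :=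
  (2 * T / 3) / (s ^ 2 + 4 * T ^ 2) - (T / 4) * Real.log (1 + s ^ 2 / (4 * T ^ 2))
    + ((8 + 6 * π) / 45) / (s ^ 2 + 4 * T ^ 2) ^ ((3 : ℝ) / 2)
    + ((s - 2) / 4) * Real.arctan (s / (2 * T))

noncomputable def Ffd (T s : ℝ) : ℝ :=
  (1 / 4) * Real.arctan (s / (2 * T)) - T / (s ^ 2 + 4 * T ^ 2)
    - (4 * T / 3) * s / (s ^ 2 + 4 * T ^ 2) ^ 2
    - 3 * ((8 + 6 * π) / 45) * s * (s ^ 2 + 4 * T ^ 2) ^ (-(5 : ℝ) / 2)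

lemma arctan_deriv_aux (T s : ℝ) (hT : 0 < T) :
    HasDerivAt (fun s : ℝ => Real.arctan (s / (2 * T))) (2 * T / (s ^ 2 + 4 * T ^ 2)) s := by
  have h := ((hasDerivAt_id s).div_const (2 * T)).arctan
  have hQ : 0 < s ^ 2 + 4 * T ^ 2 := by positivity
  have hP : (0 : ℝ) < 1 + (s / (2 * T)) ^ 2 := by positivity
  refine HasDerivAt.congr_deriv h ?_
  simp only [id_eq]
  field_simp
  ring

lemma Ff_deriv (T s : ℝ) (hT : 0 < T) : HasDerivAt (Ff T) (Ffd T s) s := by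
  have hQ : 0 < s ^ 2 + 4 * T ^ 2 := by positivity
  have hq : HasDerivAt (fun s : ℝ => s ^ 2 + 4 * T ^ 2) (2 * s) s := by
    simpa using ((hasDerivAt_id s).pow 2).add_const (4 * T ^ 2)
  have hA : HasDerivAt (fun s : ℝ => (2 * T / 3) / (s ^ 2 + 4 * T ^ 2))
      (-(4 * T / 3) * s / (s ^ 2 + 4 * T ^ 2) ^ 2) s := by
    refine HasDerivAt.congr_deriv ((hasDerivAt_const s (2 * T / 3)).div hq hQ.ne') ?_
    ring
  have hB : HasDerivAt (fun s : ℝ => (T / 4) * Real.log (1 + s ^ 2 / (4 * T ^ 2)))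
      ((T / 4) * (2 * s / (s ^ 2 + 4 * T ^ 2))) s := by
    have h1 : HasDerivAt (fun s : ℝ => 1 + s ^ 2 / (4 * T ^ 2)) (2 * s / (4 * T ^ 2)) s := by
      simpa using (((hasDerivAt_id s).pow 2).div_const (4 * T ^ 2)).const_add 1
    have hp : (0 : ℝ) < 1 + s ^ 2 / (4 * T ^ 2) := by positivity
    have h2 := (h1.log hp.ne').const_mul (T / 4)
    refine HasDerivAt.congr_deriv h2 ?_
    congr 1
    field_simp
    ring
  have hC : HasDerivAt (fun s : ℝ => ((8 + 6 * π) / 45) / (s ^ 2 + 4 * T ^ 2) ^ ((3 : ℝ) / 2))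
      (-(3 * ((8 + 6 * π) / 45) * s * (s ^ 2 + 4 * T ^ 2) ^ (-(5 : ℝ) / 2))) s := by
    have h1 : (fun s : ℝ => ((8 + 6 * π) / 45) / (s ^ 2 + 4 * T ^ 2) ^ ((3 : ℝ) / 2))
        = fun s : ℝ => ((8 + 6 * π) / 45) * (s ^ 2 + 4 * T ^ 2) ^ (-(3 : ℝ) / 2) := by
      funext y
      have hy : 0 < y ^ 2 + 4 * T ^ 2 := by positivity
      rw [neg_div, Real.rpow_neg hy.le, div_eq_mul_inv]
    rw [h1]
    have h2 := (hq.rpow_const (p := -(3 : ℝ) / 2) (Or.inl hQ.ne')).const_mul ((8 + 6 * π) / 45)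
    refine HasDerivAt.congr_deriv h2 ?_
    rw [show (-(3 : ℝ) / 2 - 1) = -(5 : ℝ) / 2 by norm_num]
    ring
  have hD : HasDerivAt (fun s : ℝ => ((s - 2) / 4) * Real.arctan (s / (2 * T)))
      ((1 / 4) * Real.arctan (s / (2 * T)) + ((s - 2) / 4) * (2 * T / (s ^ 2 + 4 * T ^ 2))) s := by
    have h1 : HasDerivAt (fun s : ℝ => (s - 2) / 4) (1 / 4) s := by
      simpa using ((hasDerivAt_id s).sub_const 2).div_const 4
    exact h1.mul (arctan_deriv_aux T s hT)
  have h := ((hA.sub hB).add hC).add hD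
  refine HasDerivAt.congr_deriv h ?_
  unfold Ffd
  field_simp
  ring

lemma Ffd_mono (T x : ℝ) (hT : 5 / 7 ≤ T) (hx : 0 ≤ x) (hx' : x < 9) :
    Ffd T (17 - x) ≤ Ffd T (17 + x) := by
  have hT0 : 0 < T := by linarith
  unfold Ffd
  set A := (17 - x) ^ 2 + 4 * T ^ 2 with hA
  set B := (17 + x) ^ 2 + 4 * T ^ 2 with hB
  have hA0 : 0 < A := by positivity
  have hBA : B - A = 68 * x := by rw [hA, hB]; ring
  have hAB : A ≤ B := by linarith
  have hB0 : 0 < B := by linarith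
  have hB1 : 1 ≤ B := by nlinarith
  have h1 : Real.arctan ((17 - x) / (2 * T)) ≤ Real.arctan ((17 + x) / (2 * T)) := by
    apply Real.arctan_strictMono.monotone
    gcongr; linarith
  -- `T/A - T/B`
  have h2 : 68 * x * T / B ^ 2 ≤ T / A - T / B := by
    have : T / A - T / B = 68 * x * T / (A * B) := by
      rw [← hBA]; field_simp
    rw [this]
    gcongr
    nlinarith
  have h3 : (4 * T / 3) * (17 - x) / B ^ 2 ≤ (4 * T / 3) * (17 - x) / A ^ 2 := by
    have : 0 ≤ 17 - x := by linarith
    gcongr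
  have hAr : B ^ (-(5 : ℝ) / 2) ≤ A ^ (-(5 : ℝ) / 2) :=
    Real.rpow_le_rpow_of_nonpos hA0 hAB (by norm_num)
  have hBr : B ^ (-(5 : ℝ) / 2) ≤ 1 / B ^ 2 := by
    have : B ^ (-(5 : ℝ) / 2) ≤ B ^ (-(2 : ℝ)) :=
      Real.rpow_le_rpow_of_exponent_le hB1 (by norm_num)
    rw [Real.rpow_neg hB0.le] at this
    simpa using this
  have hc0 : 0 < (8 + 6 * π) / 45 := by positivity
  have hc1 : (8 + 6 * π) / 45 ≤ 1 := by linarith [Real.pi_lt_four]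
  set c := (8 + 6 * π) / 45
  set a := A ^ (-(5 : ℝ) / 2)
  set b := B ^ (-(5 : ℝ) / 2)
  have h4 : 3 * c * (17 - x) * b ≤ 3 * c * (17 - x) * a := by
    have : 0 ≤ 17 - x := by linarith
    gcongr
  have h5 : 6 * (c * x) * b ≤ 6 * (c * x) * (1 / B ^ 2) := by gcongr
  have h6 : 6 * (c * x) * (1 / B ^ 2) ≤ 6 * (1 * x) * (1 / B ^ 2) := by gcongr
  have h7 : 0 ≤ (68 * x * T - (4 * T / 3) * (2 * x) - 6 * x) / B ^ 2 := by
    apply div_nonneg _ (by positivity)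
    nlinarith
  have h8 : (68 * x * T - (4 * T / 3) * (2 * x) - 6 * x) / B ^ 2 =
      68 * x * T / B ^ 2 + (4 * T / 3) * (17 - x) / B ^ 2 - (4 * T / 3) * (17 + x) / B ^ 2
        - 6 * (1 * x) * (1 / B ^ 2) := by
    ring
  have h9 : 3 * c * (17 + x) * b = 3 * c * (17 - x) * b + 6 * (c * x) * b := by ring
  linarith

noncomputable def Gg (T a d : ℝ) : ℝ :=
  - Real.arctan ((a + 2 * d) / (2 * T)) - Real.arctan ((a - 2 * d) / (2 * T))

lemma Gg_mono (T a : ℝ) (hT : 0 < T) (ha : 0 ≤ a) : MonotoneOn (Gg T a) (Set.Ico 0 (9 / 2)) := by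
  have hd : ∀ d, HasDerivAt (Gg T a) (-(2 * T / ((a + 2 * d) ^ 2 + 4 * T ^ 2) * 2)
      - (2 * T / ((a - 2 * d) ^ 2 + 4 * T ^ 2) * (-2))) d := by
    intro d
    have hp : HasDerivAt (fun d : ℝ => a + 2 * d) 2 d := by
      simpa using ((hasDerivAt_id d).const_mul 2).const_add a
    have hm : HasDerivAt (fun d : ℝ => a - 2 * d) (-2) d := by
      simpa using ((hasDerivAt_id d).const_mul 2).const_sub a
    exact ((arctan_deriv_aux T (a + 2 * d) hT).comp d hp).neg.sub
      ((arctan_deriv_aux T (a - 2 * d) hT).comp d hm)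
  apply monotoneOn_of_deriv_nonneg (convex_Ico _ _)
    (fun x _ => (hd x).continuousAt.continuousWithinAt)
    (fun x _ => (hd x).differentiableAt.differentiableWithinAt)
  intro x hx
  rw [interior_Ico] at hx
  rw [(hd x).deriv]
  have : 2 * T / ((a + 2 * x) ^ 2 + 4 * T ^ 2) ≤ 2 * T / ((a - 2 * x) ^ 2 + 4 * T ^ 2) := by
    apply div_le_div_of_nonneg_left (by positivity) (by positivity)
    nlinarith [mul_nonneg ha hx.1.le]
  linarith

lemma FF_mono (T : ℝ) (hT : 5 / 7 ≤ T) :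
    MonotoneOn (fun d => Ff T (17 + 2 * d) + Ff T (17 - 2 * d)) (Set.Ico 0 (9 / 2)) := by
  have hT0 : 0 < T := by linarith
  have hd : ∀ d, HasDerivAt (fun d => Ff T (17 + 2 * d) + Ff T (17 - 2 * d))
      (Ffd T (17 + 2 * d) * 2 + Ffd T (17 - 2 * d) * (-2)) d := by
    intro d
    have hp : HasDerivAt (fun d : ℝ => 17 + 2 * d) 2 d := by
      simpa using ((hasDerivAt_id d).const_mul 2).const_add 17
    have hm : HasDerivAt (fun d : ℝ => 17 - 2 * d) (-2) d := by
      simpa using ((hasDerivAt_id d).const_mul 2).const_sub 17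
    exact ((Ff_deriv T (17 + 2 * d) hT0).comp d hp).add
      ((Ff_deriv T (17 - 2 * d) hT0).comp d hm)
  apply monotoneOn_of_deriv_nonneg (convex_Ico _ _)
    (fun x _ => (hd x).continuousAt.continuousWithinAt)
    (fun x _ => (hd x).differentiableAt.differentiableWithinAt)
  intro x hx
  rw [interior_Ico] at hx
  rw [(hd x).deriv]
  have := Ffd_mono T (2 * x) hT (by linarith [hx.1]) (by linarith [hx.2])
  linarith

/-- The part of `E` independent of `d`. -/
noncomputable def Kk (T : ℝ) : ℝ :=
  - (4 * T / 3) / (17 ^ 2 + 4 * T ^ 2)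
    + (T / 2) * Real.log (1 + 17 ^ 2 / (4 * T ^ 2))
    + (2 * (8 + 6 * π) / 45) / (17 ^ 2 + 4 * T ^ 2) ^ ((3 : ℝ) / 2)
    + (2 * Real.arctan (1 / (2 * T)) + 2 * Real.arctan (5 / (2 * T))
      + 2 * Real.arctan (9 / (2 * T)) + 2 * Real.arctan (13 / (2 * T)))
    - (15 / 2) * Real.arctan (17 / (2 * T))

lemma Efun_eq (T d : ℝ) : Efun T d = (Ff T (17 + 2 * d) + Ff T (17 - 2 * d))
    + (Gg T 1 d + Gg T 5 d + Gg T 9 d + Gg T 13 d) + Kk T := by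
  unfold Efun Ff Gg Kk
  simp only [Finset.sum_range_succ, Finset.sum_range_zero]
  push_cast
  rw [show 2 * d + 17 = 17 + 2 * d by ring, show -2 * d + 17 = 17 - 2 * d by ring,
    show 2 * d + 1 + 4 * 0 = 1 + 2 * d by ring, show 2 * d + 1 + 4 * 1 = 5 + 2 * d by ring,
    show 2 * d + 1 + 4 * 2 = 9 + 2 * d by ring, show 2 * d + 1 + 4 * 3 = 13 + 2 * d by ring,
    show -2 * d + 1 + 4 * 0 = 1 - 2 * d by ring, show -2 * d + 1 + 4 * 1 = 5 - 2 * d by ring,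
    show -2 * d + 1 + 4 * 2 = 9 - 2 * d by ring, show -2 * d + 1 + 4 * 3 = 13 - 2 * d by ring,
    show (1 + 4 * 0 : ℝ) = 1 by norm_num, show (1 + 4 * 1 : ℝ) = 5 by norm_num,
    show (1 + 4 * 2 : ℝ) = 9 by norm_num, show (1 + 4 * 3 : ℝ) = 13 by norm_num]
  ring

lemma Efun_mono (T : ℝ) (hT : 5 / 7 ≤ T) : MonotoneOn (Efun T) (Set.Ico 0 (9 / 2)) := by
  have hT0 : 0 < T := by linarith
  intro x hx y hy hxy
  rw [Efun_eq, Efun_eq]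
  have h0 := FF_mono T hT hx hy hxy
  have h1 := Gg_mono T 1 hT0 (by norm_num) hx hy hxy
  have h2 := Gg_mono T 5 hT0 (by norm_num) hx hy hxy
  have h3 := Gg_mono T 9 hT0 (by norm_num) hx hy hxy
  have h4 := Gg_mono T 13 hT0 (by norm_num) hx hy hxy
  simp only at h0
  linarith

lemma Efun_zero (T : ℝ) (hT : 0 < T) : 0 < Efun T 0 := by
  have h : Efun T 0 = 4 * (((8 + 6 * π) / 45) / (17 ^ 2 + 4 * T ^ 2) ^ ((3 : ℝ) / 2)) := by
    rw [Efun_eq]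
    unfold Ff Gg Kk
    simp only [mul_zero, add_zero, sub_zero]
    ring
  rw [h]
  positivity

theorem stmt_3 (δ₁ d T : ℝ) (h0 : 0 ≤ δ₁) (h1 : δ₁ ≤ d) (h2 : d < 9 / 2)
    (hT : 5 / 7 ≤ T) : 0 < Efun T δ₁ ∧ Efun T δ₁ ≤ Efun T d := by
  have hz : (0 : ℝ) ∈ Set.Ico (0 : ℝ) (9 / 2) := by norm_num
  have ha : δ₁ ∈ Set.Ico (0 : ℝ) (9 / 2) := ⟨h0, by linarith⟩
  have hb : d ∈ Set.Ico (0 : ℝ) (9 / 2) := ⟨by linarith, h2⟩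
  exact ⟨lt_of_lt_of_le (Efun_zero T (by linarith)) (Efun_mono T hT hz ha h0),
    Efun_mono T hT ha hb h1⟩
end

section
/- For all real numbers d and T with 1/4 ≤ d ≤ 5/8 and T ≥ 5/7, one has E(T,d)/π ≤ (640d − 112)/(1536(3T − 1)) + 1/2¹⁰. -/
open Real

/-- Bound for the contribution of the small terms. -/
noncomputable def WW (T : ℝ) : ℝ :=
  4*T*5/((4*T^2+25)^2 - 25*(25/16)) + 4*T*9/((4*T^2+81)^2 - 81*(25/16))
    + 4*T*13/((4*T^2+169)^2 - 169*(25/16))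
    + (T/2/(4*T^2+248) + 81/2*T/(4*T^2+248)^2)

lemma end1 (T : ℝ) (hT : 5/7 ≤ T) :
    4*T*((1/4 : ℝ)/((4*T^2+1)^2 + (4*T^2-1)*(1/4 : ℝ))) + (1/4 : ℝ) * WW T + 31/50000
      ≤ 31415/10000 * (48/(1536*(3*T-1)) + 1/1024) := by
  obtain ⟨s, rfl⟩ : ∃ s, T = 5/7 + s := ⟨T - 5/7, by ring⟩
  have hs : 0 ≤ s := by linarith
  have n1 : 0 < (4*(5/7+s)^2+1)^2 + (4*(5/7+s)^2-1)*(1/4 : ℝ) := by nlinarith [sq_nonneg s]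
  have n2 : 0 < (4*(5/7+s)^2+25)^2 - 25*(25/16) := by nlinarith [sq_nonneg s]
  have n3 : 0 < (4*(5/7+s)^2+81)^2 - 81*(25/16) := by nlinarith [sq_nonneg s]
  have n4 : 0 < (4*(5/7+s)^2+169)^2 - 169*(25/16) := by nlinarith [sq_nonneg s]
  have n5 : 0 < 4*(5/7+s)^2+248 := by positivity
  have n6 : 0 < 3*(5/7+s)-1 := by linarith
  rw [← sub_nonneg]
  have key : 31415/10000 * (48/(1536*(3*(5/7+s)-1)) + 1/1024) -
      (4*(5/7+s)*((1/4 : ℝ)/((4*(5/7+s)^2+1)^2 + (4*(5/7+s)^2-1)*(1/4 : ℝ))) + (1/4 : ℝ) * WW (5/7+s) + 31/50000)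
      = (((3410423367089738596598657994314546525031 / 5856777879769936109240320) + (-3052759124309366850943059788242135747941 / 4781043167159131517747200) * s + (10285090766579333786017677666733131103851 / 853757708421273485312000) * s ^ 2)
        + (5166091830765729494614762641051342843923 / 174236267024749690880000) * s ^ 3
        + (10245856380861737191083313472787605049037 / 435590667561874227200000) * s ^ 4
        + (3790295506934407914932924596247644936263 / 248908952892499558400000) * s ^ 5
        + (36117888819956169450328016139438303147 / 4444802730223206400000) * s ^ 6
        + (33127776493438370811406148947862297383 / 8889605460446412800000) * s ^ 7
        + (484976464736754534384060802561997 / 354336952345600000) * s ^ 8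
        + (730839896899335475196267929481629 / 1619826067865600000) * s ^ 9
        + (5036846779710795050759691327 / 41322093568000) * s ^ 10
        + (2535592591308458471848840021 / 82644187136000) * s ^ 11
        + (5744880776828942368848761 / 922368160000) * s ^ 12
        + (647524871108318754715261 / 527067520000) * s ^ 13
        + (15474400413519855379083 / 82354300000) * s ^ 14
        + (98924857218487662723 / 3361400000) * s ^ 15
        + (4950742651092166 / 1500625) * s ^ 16
        + (7125931683547 / 17500) * s ^ 17
        + (4732482076472 / 153125) * s ^ 18
        + (63554387772 / 21875) * s ^ 19
        + (367421696 / 3125) * s ^ 20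
        + (24063552 / 3125) * s ^ 21) /
        (((4*(5/7+s)^2+1)^2 + (4*(5/7+s)^2-1)*(1/4 : ℝ)) * ((4*(5/7+s)^2+25)^2 - 25*(25/16))
          * ((4*(5/7+s)^2+81)^2 - 81*(25/16)) * ((4*(5/7+s)^2+169)^2 - 169*(25/16))
          * (4*(5/7+s)^2+248)^2 * (3*(5/7+s)-1)) := by
    unfold WW
    generalize hA : (4*(5/7+s)^2+1)^2 + (4*(5/7+s)^2-1)*(1/4 : ℝ) = A at *
    generalize hB : (4*(5/7+s)^2+25)^2 - 25*(25/16) = B at *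
    generalize hC : (4*(5/7+s)^2+81)^2 - 81*(25/16) = C at *
    generalize hD : (4*(5/7+s)^2+169)^2 - 169*(25/16) = D at *
    generalize hG : 4*(5/7+s)^2+248 = G at *
    generalize hH : 3*(5/7+s)-1 = H at *
    have n1' := n1.ne'
    have n2' := n2.ne'
    have n3' := n3.ne'
    have n4' := n4.ne'
    have n5' := n5.ne'
    have n6' := n6.ne'
    rw [eq_div_iff (by positivity)]
    field_simp
    subst hA hB hC hD hG hH
    ring
  rw [key]
  have hq : 0 ≤ (3410423367089738596598657994314546525031 / 5856777879769936109240320) + (-3052759124309366850943059788242135747941 / 4781043167159131517747200) * s + (10285090766579333786017677666733131103851 / 853757708421273485312000) * s ^ 2 := by nlinarith [sq_nonneg (s - 1/36)]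
  apply div_nonneg
  · have : 0 ≤ (5166091830765729494614762641051342843923 / 174236267024749690880000) * s ^ 3
        + (10245856380861737191083313472787605049037 / 435590667561874227200000) * s ^ 4
        + (3790295506934407914932924596247644936263 / 248908952892499558400000) * s ^ 5
        + (36117888819956169450328016139438303147 / 4444802730223206400000) * s ^ 6
        + (33127776493438370811406148947862297383 / 8889605460446412800000) * s ^ 7
        + (484976464736754534384060802561997 / 354336952345600000) * s ^ 8
        + (730839896899335475196267929481629 / 1619826067865600000) * s ^ 9
        + (5036846779710795050759691327 / 41322093568000) * s ^ 10
        + (2535592591308458471848840021 / 82644187136000) * s ^ 11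
        + (5744880776828942368848761 / 922368160000) * s ^ 12
        + (647524871108318754715261 / 527067520000) * s ^ 13
        + (15474400413519855379083 / 82354300000) * s ^ 14
        + (98924857218487662723 / 3361400000) * s ^ 15
        + (4950742651092166 / 1500625) * s ^ 16
        + (7125931683547 / 17500) * s ^ 17
        + (4732482076472 / 153125) * s ^ 18
        + (63554387772 / 21875) * s ^ 19
        + (367421696 / 3125) * s ^ 20
        + (24063552 / 3125) * s ^ 21 := by positivity
    linarith
  · positivity

lemma end2 (T : ℝ) (hT : 5/7 ≤ T) :
    4*T*((25/16 : ℝ)/((4*T^2+1)^2 + (4*T^2-1)*(25/16 : ℝ))) + (25/16 : ℝ) * WW T + 31/50000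
      ≤ 31415/10000 * (288/(1536*(3*T-1)) + 1/1024) := by
  obtain ⟨s, rfl⟩ : ∃ s, T = 5/7 + s := ⟨T - 5/7, by ring⟩
  have hs : 0 ≤ s := by linarith
  have n1 : 0 < (4*(5/7+s)^2+1)^2 + (4*(5/7+s)^2-1)*(25/16 : ℝ) := by nlinarith [sq_nonneg s]
  have n2 : 0 < (4*(5/7+s)^2+25)^2 - 25*(25/16) := by nlinarith [sq_nonneg s]
  have n3 : 0 < (4*(5/7+s)^2+81)^2 - 81*(25/16) := by nlinarith [sq_nonneg s]
  have n4 : 0 < (4*(5/7+s)^2+169)^2 - 169*(25/16) := by nlinarith [sq_nonneg s]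
  have n5 : 0 < 4*(5/7+s)^2+248 := by positivity
  have n6 : 0 < 3*(5/7+s)-1 := by linarith
  rw [← sub_nonneg]
  have key : 31415/10000 * (288/(1536*(3*(5/7+s)-1)) + 1/1024) -
      (4*(5/7+s)*((25/16 : ℝ)/((4*(5/7+s)^2+1)^2 + (4*(5/7+s)^2-1)*(25/16 : ℝ))) + (25/16 : ℝ) * WW (5/7+s) + 31/50000)
      = (((158507546922876211540895051916594406142607 / 23427111519079744436961280) + (297820563257938479885903385737371421848223 / 19124172668636526070988800) * s + (34317816803850489712894665783330381531321 / 487861547669299134464000) * s ^ 2)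
        + (668088168353818385879372179721941279059017 / 4878615476692991344640000) * s ^ 3
        + (151004320586340565918346569907558723382689 / 1742362670247496908800000) * s ^ 4
        + (44689767055244437211750072177786160104731 / 995635811569998233600000) * s ^ 5
        + (349131786436777216550183349127398211467 / 17779210920892825600000) * s ^ 6
        + (277878161204721821387995034849569891063 / 35558421841785651200000) * s ^ 7
        + (407777716371450914008190957943589 / 177168476172800000) * s ^ 8
        + (76022875697029500005685514776239 / 115701861990400000) * s ^ 9
        + (811946452995060865798318000757 / 5785093099520000) * s ^ 10
        + (53112809430938550848049509841 / 1652883742720000) * s ^ 11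
        + (11742574753766676482435573 / 2305920400000) * s ^ 12
        + (1342238654213236414326197 / 1317668800000) * s ^ 13
        + (41232784866578805068923 / 329417200000) * s ^ 14
        + (317108050051152056163 / 13445600000) * s ^ 15
        + (19385333944204 / 8575) * s ^ 16
        + (159007567398353 / 428750) * s ^ 17
        + (3892576942718 / 153125) * s ^ 18
        + (66937658743 / 21875) * s ^ 19
        + (363069696 / 3125) * s ^ 20
        + (24063552 / 3125) * s ^ 21) /
        (((4*(5/7+s)^2+1)^2 + (4*(5/7+s)^2-1)*(25/16 : ℝ)) * ((4*(5/7+s)^2+25)^2 - 25*(25/16))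
          * ((4*(5/7+s)^2+81)^2 - 81*(25/16)) * ((4*(5/7+s)^2+169)^2 - 169*(25/16))
          * (4*(5/7+s)^2+248)^2 * (3*(5/7+s)-1)) := by
    unfold WW
    generalize hA : (4*(5/7+s)^2+1)^2 + (4*(5/7+s)^2-1)*(25/16 : ℝ) = A at *
    generalize hB : (4*(5/7+s)^2+25)^2 - 25*(25/16) = B at *
    generalize hC : (4*(5/7+s)^2+81)^2 - 81*(25/16) = C at *
    generalize hD : (4*(5/7+s)^2+169)^2 - 169*(25/16) = D at *
    generalize hG : 4*(5/7+s)^2+248 = G at *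
    generalize hH : 3*(5/7+s)-1 = H at *
    have n1' := n1.ne'
    have n2' := n2.ne'
    have n3' := n3.ne'
    have n4' := n4.ne'
    have n5' := n5.ne'
    have n6' := n6.ne'
    rw [eq_div_iff (by positivity)]
    field_simp
    subst hA hB hC hD hG hH
    ring
  rw [key]
  have hq : 0 ≤ (158507546922876211540895051916594406142607 / 23427111519079744436961280) + (297820563257938479885903385737371421848223 / 19124172668636526070988800) * s + (34317816803850489712894665783330381531321 / 487861547669299134464000) * s ^ 2 := by nlinarith [sq_nonneg (s - 1/36)]
  apply div_nonneg
  · have : 0 ≤ (668088168353818385879372179721941279059017 / 4878615476692991344640000) * s ^ 3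
        + (151004320586340565918346569907558723382689 / 1742362670247496908800000) * s ^ 4
        + (44689767055244437211750072177786160104731 / 995635811569998233600000) * s ^ 5
        + (349131786436777216550183349127398211467 / 17779210920892825600000) * s ^ 6
        + (277878161204721821387995034849569891063 / 35558421841785651200000) * s ^ 7
        + (407777716371450914008190957943589 / 177168476172800000) * s ^ 8
        + (76022875697029500005685514776239 / 115701861990400000) * s ^ 9
        + (811946452995060865798318000757 / 5785093099520000) * s ^ 10
        + (53112809430938550848049509841 / 1652883742720000) * s ^ 11
        + (11742574753766676482435573 / 2305920400000) * s ^ 12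
        + (1342238654213236414326197 / 1317668800000) * s ^ 13
        + (41232784866578805068923 / 329417200000) * s ^ 14
        + (317108050051152056163 / 13445600000) * s ^ 15
        + (19385333944204 / 8575) * s ^ 16
        + (159007567398353 / 428750) * s ^ 17
        + (3892576942718 / 153125) * s ^ 18
        + (66937658743 / 21875) * s ^ 19
        + (363069696 / 3125) * s ^ 20
        + (24063552 / 3125) * s ^ 21 := by positivity
    linarith
  · positivity

lemma chord (T x : ℝ) (hT : 5/7 ≤ T) (h1 : 1/2 ≤ x) (h2 : x ≤ 5/4) :
    x^2/((4*T^2+1)^2 + (4*T^2-1)*x^2) ≤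
      (5/4-x)/(3/4) * ((1/4:ℝ)/((4*T^2+1)^2 + (4*T^2-1)*(1/4:ℝ)))
      + (x-1/2)/(3/4) * ((25/16:ℝ)/((4*T^2+1)^2 + (4*T^2-1)*(25/16:ℝ))) := by
  have hz : 1 ≤ 4*T^2-1 := by nlinarith
  have hab : 0 ≤ (4*T^2+1)^2 - (4*T^2-1)*(x/2+5/8+5/4*x) := by nlinarith [sq_nonneg (4*T^2-1)]
  generalize hα : (4*T^2+1)^2 = α at *
  generalize hβ : (4*T^2-1) = β at *
  have ha : 0 < α := by rw [← hα]; positivity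
  have hb : 0 < β := by linarith
  have hx : 0 < x := by linarith
  rw [← sub_nonneg]
  have key : (5/4-x)/(3/4) * ((1/4:ℝ)/(α + β*(1/4:ℝ)))
      + (x-1/2)/(3/4) * ((25/16:ℝ)/(α + β*(25/16:ℝ))) - x^2/(α+β*x^2)
      = (x-1/2)*(5/4-x)*α*(α - β*(x/2+5/8+5/4*x)) /
        ((α+β*x^2)*(α + β*(1/4:ℝ))*(α + β*(25/16:ℝ))) := by
    have e1 : (α+β*x^2) ≠ 0 := by positivity
    have e2 : (α + β*(1/4:ℝ)) ≠ 0 := by positivity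
    have e3 : (α + β*(25/16:ℝ)) ≠ 0 := by positivity
    field_simp
    ring
  rw [key]
  have : 0 ≤ x - 1/2 := by linarith
  have : 0 ≤ 5/4 - x := by linarith
  positivity

lemma arctan_le_id {r : ℝ} (hr : 0 ≤ r) : arctan r ≤ r := by
  have h : 0 ≤ arctan r := arctan_nonneg.2 hr
  have := Real.le_tan h (arctan_lt_pi_div_two r)
  rwa [tan_arctan] at this

lemma arctan_diff (T a b P : ℝ) (hT : 0 < T) (hP : 0 < P) (h : P = 4*T^2 + a*b) :
    arctan (a/(2*T)) - arctan (b/(2*T)) = arctan (2*T*(a-b)/P) := by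
  have e1 : 1 - b/(2*T)*(2*T*(a-b)/P) = (4*T^2+b^2)/P := by
    field_simp
    rw [h]; ring
  have hq : 0 < 4*T^2+b^2 := by positivity
  have key : arctan (b/(2*T)) + arctan (2*T*(a-b)/P) = arctan (a/(2*T)) := by
    rw [arctan_add]
    · congr 1
      rw [e1]
      field_simp
      rw [h]; ring
    · have : 0 < (4*T^2+b^2)/P := by positivity
      linarith
  linarith

/-- the second difference of arctan -/
lemma arctan_dd (T c x : ℝ) (hT : 0 < T) (hx : 0 < x) (hc : 1 ≤ c)
    (hp : 0 < 4*T^2 + c^2 - c*x) :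
    2 * arctan (c/(2*T)) - arctan ((x+c)/(2*T)) - arctan ((-x+c)/(2*T))
      ≤ 4*T*c*x^2/((4*T^2+c^2)^2 - c^2*x^2 + 4*T^2*x^2) := by
  have hq : 0 < 4*T^2 + c^2 + c*x := by positivity
  have e1 := arctan_diff T c (-x+c) _ hT hp (by ring)
  have e2 := arctan_diff T (x+c) c _ hT hq (by ring)
  rw [show c - (-x+c) = x by ring] at e1
  rw [show x + c - c = x by ring] at e2
  have hD : 0 < (4*T^2+c^2)^2 - c^2*x^2 + 4*T^2*x^2 := by
    nlinarith [mul_pos hp hq, sq_nonneg (T*x)]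
  have hDe : (4*T^2+c^2)^2 - c^2*x^2 + 4*T^2*x^2
    = (4*T^2 + c^2 - c*x)*(4*T^2 + c^2 + c*x) + 4*T^2*x^2 := by ring
  have hsub : 2*c*x = (4*T^2 + c^2 + c*x) - (4*T^2 + c^2 - c*x) := by ring
  generalize 4*T^2 + c^2 - c*x = p at *
  generalize 4*T^2 + c^2 + c*x = q at *
  generalize (4*T^2+c^2)^2 - c^2*x^2 + 4*T^2*x^2 = D at *
  have e3 : arctan (2*T*x/p) - arctan (2*T*x/q) = arctan (4*T*c*x^2/D) := by
    have h : arctan (2*T*x/p) + arctan (-(2*T*x/q)) = arctan (4*T*c*x^2/D) := by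
      have h1 : 1 - (2*T*x/p) * (-(2*T*x/q)) = D/(p*q) := by
        rw [hDe]; field_simp; ring
      have h2 : 2*T*x/p + (-(2*T*x/q)) = 4*T*c*x^2/(p*q) := by
        have : 4*T*c*x^2 = 2*T*x*(2*c*x) := by ring
        rw [this, hsub]; field_simp; ring
      have : 0 < D/(p*q) := by positivity
      rw [arctan_add (by linarith), h1, h2]
      congr 1
      field_simp
    rw [arctan_neg] at h; linarith
  have hr : 0 ≤ 4*T*c*x^2/D := by positivity
  have := arctan_le_id hr
  linarith

/-- the potential of the boundary terms -/
noncomputable def GG (T u : ℝ) : ℝ :=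
  (u-2)/4 * arctan (u/(2*T)) - T/4 * Real.log (1 + u^2/(4*T^2))

lemma GG_deriv (T u : ℝ) (hT : 0 < T) :
    HasDerivAt (GG T) (arctan (u/(2*T)) / 4 - T/(4*T^2+u^2)) u := by
  have h1 : HasDerivAt (fun u : ℝ => u/(2*T)) (1/(2*T)) u := (hasDerivAt_id u).div_const _
  have h2 := h1.arctan
  have h3 : HasDerivAt (fun u : ℝ => (u-2)/4) (1/4) u := ((hasDerivAt_id u).sub_const 2).div_const 4
  have h4 : HasDerivAt (fun u : ℝ => 1 + u^2/(4*T^2)) (2*u/(4*T^2)) u := by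
    have := ((hasDerivAt_pow 2 u).div_const (4*T^2)).const_add 1
    simpa using this
  have hne : 1 + u^2/(4*T^2) ≠ 0 := by positivity
  have h5 := (h4.log hne).const_mul (T/4)
  have h6 := (h3.mul h2).sub h5
  refine h6.congr_deriv ?_
  have : (4*T^2+u^2) ≠ 0 := by positivity
  have h7 : 1 + u^2/(4*T^2) = (4*T^2+u^2)/(4*T^2) := by field_simp
  have h8 : 1 + (u/(2*T))^2 = (4*T^2+u^2)/(4*T^2) := by field_simp; ring
  rw [h7, h8]
  field_simp
  ring

lemma GG_deriv_diff (T x : ℝ) (hT : 0 < T) (h1 : 0 ≤ x) (h2 : x ≤ 5/4) :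
    (arctan ((17+x)/(2*T)) / 4 - T/(4*T^2+(17+x)^2))
      - (arctan ((17-x)/(2*T)) / 4 - T/(4*T^2+(17-x)^2))
      ≤ (T/2/(4*T^2+248) + 73/2*T/(4*T^2+248)^2) * (2*x) := by
  have hz : 0 < 4*T^2 := by positivity
  have hP : 0 < 4*T^2 + 289 - x^2 := by nlinarith
  have ha : arctan ((17+x)/(2*T)) - arctan ((17-x)/(2*T)) ≤ 4*T*x/(4*T^2+289-x^2) := by
    have h := arctan_diff T (17+x) (17-x) _ hT hP (by ring)
    rw [show 2*T*(17+x-(17-x)) = 4*T*x by ring] at h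
    have : arctan (4*T*x/(4*T^2+289-x^2)) ≤ 4*T*x/(4*T^2+289-x^2) := arctan_le_id (by positivity)
    linarith
  have hb : 4*T*x/(4*T^2+289-x^2) ≤ 4*T*x/(4*T^2+248) := by
    apply div_le_div_of_nonneg_left <;> first | positivity | nlinarith
  have hc : T/(4*T^2+(17-x)^2) - T/(4*T^2+(17+x)^2) ≤ 68*T*x/(4*T^2+248)^2 := by
    have e : T/(4*T^2+(17-x)^2) - T/(4*T^2+(17+x)^2)
        = 68*T*x/((4*T^2+(17-x)^2)*(4*T^2+(17+x)^2)) := by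
      have : 0 < 4*T^2+(17-x)^2 := by positivity
      have : 0 < 4*T^2+(17+x)^2 := by positivity
      field_simp; ring
    rw [e]
    have g1 : 4*T^2+248 ≤ 4*T^2+(17-x)^2 := by nlinarith
    have g2 : 4*T^2+248 ≤ 4*T^2+(17+x)^2 := by nlinarith
    apply div_le_div_of_nonneg_left (by positivity) (by positivity)
    rw [sq (4*T^2+248)]
    apply mul_le_mul g1 g2 (by positivity) (by positivity)
  have hd : 68*T*x/(4*T^2+248)^2 ≤ 73*T*x/(4*T^2+248)^2 := by
    gcongr; try norm_num
  have : (T/2/(4*T^2+248) + 73/2*T/(4*T^2+248)^2) * (2*x)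
      = 4*T*x/(4*T^2+248)/4 + 73*T*x/(4*T^2+248)^2 := by
    field_simp
  rw [this]; linarith

lemma GG_dd (T x : ℝ) (hT : 0 < T) (h1 : 0 ≤ x) (h2 : x ≤ 5/4) :
    GG T (17+x) + GG T (17-x) - 2 * GG T 17
      ≤ (T/2/(4*T^2+248) + 73/2*T/(4*T^2+248)^2) * x^2 := by
  set K := (T/2/(4*T^2+248) + 73/2*T/(4*T^2+248)^2) with hK
  have hd : ∀ y : ℝ, HasDerivAt (fun y => K*y^2 - (GG T (17+y) + GG T (17-y)))
      (K*(2*y) - ((arctan ((17+y)/(2*T)) / 4 - T/(4*T^2+(17+y)^2))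
      - (arctan ((17-y)/(2*T)) / 4 - T/(4*T^2+(17-y)^2)))) y := by
    intro y
    have a1 := (GG_deriv T (17+y) hT).comp_const_add 17 y
    have a2 := (GG_deriv T (17-y) hT).comp_const_sub 17 y
    have a3 := (hasDerivAt_pow 2 y).const_mul K
    refine (a3.sub (a1.add a2)).congr_deriv ?_
    norm_num; ring
  have hm : MonotoneOn (fun y => K*y^2 - (GG T (17+y) + GG T (17-y))) (Set.Icc 0 (5/4)) := by
    apply monotoneOn_of_deriv_nonneg (convex_Icc _ _)
    · exact fun y _ => (hd y).continuousAt.continuousWithinAt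
    · exact fun y _ => (hd y).differentiableAt.differentiableWithinAt
    · intro y hy
      rw [interior_Icc] at hy
      rw [(hd y).deriv]
      have := GG_deriv_diff T y hT hy.1.le hy.2.le
      linarith
  have := hm (Set.mem_Icc.2 ⟨le_refl _, by norm_num⟩) (Set.mem_Icc.2 ⟨h1, h2⟩) h1
  norm_num at this
  linarith

lemma rat_dd (T x : ℝ) (hT : 0 < T) (h1 : 0 ≤ x) (h2 : x ≤ 5/4) :
    (2 * T / 3) / ((x + 17) ^ 2 + 4 * T ^ 2)
    + (2 * T / 3) / ((-x + 17) ^ 2 + 4 * T ^ 2)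
    - (4 * T / 3) / (17 ^ 2 + 4 * T ^ 2) ≤ 4*T/(4*T^2+248)^2 * x^2 := by
  have hA : 0 < (x + 17) ^ 2 + 4 * T ^ 2 := by positivity
  have hB : 0 < (-x + 17) ^ 2 + 4 * T ^ 2 := by positivity
  have hC : (0:ℝ) < 17 ^ 2 + 4 * T ^ 2 := by positivity
  have e : (2 * T / 3) / ((x + 17) ^ 2 + 4 * T ^ 2)
    + (2 * T / 3) / ((-x + 17) ^ 2 + 4 * T ^ 2)
    - (4 * T / 3) / (17 ^ 2 + 4 * T ^ 2)
    = 4*T*x^2*((867 - 4*T^2 - x^2)/3)/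
      ((((x + 17) ^ 2 + 4 * T ^ 2)*((-x + 17) ^ 2 + 4 * T ^ 2))*(17 ^ 2 + 4 * T ^ 2)) := by
    field_simp; ring
  rw [e]
  have g1 : 4*T^2+248 ≤ (x + 17) ^ 2 + 4 * T ^ 2 := by nlinarith
  have g2 : 4*T^2+248 ≤ (-x + 17) ^ 2 + 4 * T ^ 2 := by nlinarith
  have g3 : (4*T^2+248)^2 ≤ ((x + 17) ^ 2 + 4 * T ^ 2)*((-x + 17) ^ 2 + 4 * T ^ 2) := by
    rw [sq (4*T^2+248)]
    exact mul_le_mul g1 g2 (by positivity) (by positivity)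
  have g4 : (867 - 4*T^2 - x^2)/3 ≤ 17 ^ 2 + 4 * T ^ 2 := by nlinarith [sq_nonneg x, sq_nonneg T]
  calc _ ≤ 4*T*x^2*(17 ^ 2 + 4 * T ^ 2)/
      ((((x + 17) ^ 2 + 4 * T ^ 2)*((-x + 17) ^ 2 + 4 * T ^ 2))*(17 ^ 2 + 4 * T ^ 2)) := by
        gcongr
    _ = 4*T*x^2/(((x + 17) ^ 2 + 4 * T ^ 2)*((-x + 17) ^ 2 + 4 * T ^ 2)) := by
        field_simp
    _ ≤ 4*T*x^2/(4*T^2+248)^2 := by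
        apply div_le_div_of_nonneg_left <;> first | positivity | assumption
    _ = _ := by ring

lemma rpow_bound (c a : ℝ) (hc : 0 ≤ c) (ha : 248 ≤ a) :
    c / a ^ ((3:ℝ)/2) ≤ c / 3904 := by
  apply div_le_div_of_nonneg_left hc (by norm_num)
  have h1 : (248:ℝ) ^ ((3:ℝ)/2) ≤ a ^ ((3:ℝ)/2) := by
    apply Real.rpow_le_rpow <;> first | assumption | norm_num
  refine le_trans ?_ h1
  have h2 : ((248:ℝ) ^ ((3:ℝ)/2))^2 = 248^3 := by
    rw [← Real.rpow_natCast, ← Real.rpow_mul (by norm_num)]; norm_num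
  have h3 : 0 ≤ (248:ℝ) ^ ((3:ℝ)/2) := by positivity
  nlinarith

lemma small_term (T c x : ℝ) (hT : 0 < T) (hx : 0 < x) (hx2 : x ≤ 5/4) (hc : 5 ≤ c) :
    2 * arctan (c/(2*T)) - arctan ((x+c)/(2*T)) - arctan ((-x+c)/(2*T))
      ≤ 4*T*c/((4*T^2+c^2)^2 - c^2*(25/16)) * x^2 := by
  refine (arctan_dd T c x hT hx (by linarith) (by nlinarith [sq_nonneg T])).trans ?_
  have hxx : x^2 ≤ 25/16 := by nlinarith
  have hpos : 0 < (4*T^2+c^2)^2 - c^2*(25/16) := by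
    have : 0 < (4*T^2)^2 + 2*(4*T^2)*c^2 := by positivity
    nlinarith [mul_pos (show 0 < c^2 by positivity) (show 0 < c^2 - 25/16 by nlinarith)]
  have : 4*T*c/((4*T^2+c^2)^2 - c^2*(25/16)) * x^2 = 4*T*c*x^2/((4*T^2+c^2)^2 - c^2*(25/16)) := by
    ring
  rw [this]
  apply div_le_div_of_nonneg_left (by positivity) hpos
  have : 0 ≤ 4*T^2*x^2 := by positivity
  have : c^2*x^2 ≤ c^2*(25/16) := by gcongr
  linarith

lemma E_bound (d x T : ℝ) (hd : x = 2*d) (hx1 : 1/2 ≤ x) (hx2 : x ≤ 5/4) (hT : 5 / 7 ≤ T) :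
    Efun T d ≤ 4*T*(x^2/((4*T^2+1)^2 + (4*T^2-1)*x^2)) + x^2 * WW T + 31/50000 := by
  have hx0 : 0 < x := by linarith
  have hT0 : 0 < T := by linarith
  have hpi2 : π < 3.1416 := Real.pi_lt_d4
  have hpi0 := Real.pi_pos
  have b1 := arctan_dd T 1 x hT0 hx0 le_rfl (by nlinarith)
  have b5 := small_term T 5 x hT0 hx0 hx2 (by norm_num)
  have b9 := small_term T 9 x hT0 hx0 hx2 (by norm_num)
  have b13 := small_term T 13 x hT0 hx0 hx2 (by norm_num)
  have bG := GG_dd T x hT0 hx0.le hx2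
  have bR := rat_dd T x hT0 hx0.le hx2
  have hc0 : 0 ≤ (8+6*π)/45 := by positivity
  have p1 := rpow_bound ((8+6*π)/45) ((x+17)^2+4*T^2) hc0 (by nlinarith)
  have p2 := rpow_bound ((8+6*π)/45) ((-x+17)^2+4*T^2) hc0 (by nlinarith)
  have p3 := rpow_bound (2*(8+6*π)/45) (17^2+4*T^2) (by positivity) (by nlinarith)
  have p4 : (8+6*π)/45/3904 + (8+6*π)/45/3904 + 2*(8+6*π)/45/3904 ≤ 31/50000 := by
    norm_num at hpi2 ⊢
    linarith
  have e1 : 4*T*(x^2/((4*T^2+1)^2 + (4*T^2-1)*x^2))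
      = 4*T*1*x^2/((4*T^2+1^2)^2 - 1^2*x^2 + 4*T^2*x^2) := by
    rw [← mul_div_assoc]; congr 1 <;> ring
  have eW : x^2 * WW T = 4*T*5/((4*T^2+5^2)^2 - 5^2*(25/16)) * x^2
      + 4*T*9/((4*T^2+9^2)^2 - 9^2*(25/16)) * x^2
      + 4*T*13/((4*T^2+13^2)^2 - 13^2*(25/16)) * x^2
      + (T/2/(4*T^2+248) + 73/2*T/(4*T^2+248)^2) * x^2 + 4*T/(4*T^2+248)^2 * x^2 := by
    unfold WW
    norm_num
    ring
  have eS : ∑ k ∈ Finset.range 4,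
        (2 * Real.arctan ((1 + 4 * (k : ℝ)) / (2 * T))
          - Real.arctan ((x + 1 + 4 * (k : ℝ)) / (2 * T))
          - Real.arctan ((-x + 1 + 4 * (k : ℝ)) / (2 * T)))
      = (2 * arctan (1/(2*T)) - arctan ((x+1)/(2*T)) - arctan ((-x+1)/(2*T)))
      + (2 * arctan (5/(2*T)) - arctan ((x+5)/(2*T)) - arctan ((-x+5)/(2*T)))
      + (2 * arctan (9/(2*T)) - arctan ((x+9)/(2*T)) - arctan ((-x+9)/(2*T)))
      + (2 * arctan (13/(2*T)) - arctan ((x+13)/(2*T)) - arctan ((-x+13)/(2*T))) := by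
    simp only [Finset.sum_range_succ, Finset.sum_range_zero]
    push_cast
    simp only [add_assoc]
    norm_num
  have eG : GG T (17+x) + GG T (17-x) - 2 * GG T 17 =
      (T / 2) * Real.log (1 + 17 ^ 2 / (4 * T ^ 2))
    - (T / 4) * Real.log (1 + (x + 17) ^ 2 / (4 * T ^ 2))
    - (T / 4) * Real.log (1 + (-x + 17) ^ 2 / (4 * T ^ 2))
    + ((x + 15) / 4) * Real.arctan ((x + 17) / (2 * T))
    + ((-x + 15) / 4) * Real.arctan ((-x + 17) / (2 * T))
    - (15 / 2) * Real.arctan (17 / (2 * T)) := by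
    unfold GG
    rw [show 17 + x = x + 17 by ring, show 17 - x = -x + 17 by ring]
    ring
  have h2d : 2*d = x := hd.symm
  have h2d' : -2*d = -x := by linarith
  rw [e1, eW]
  unfold Efun
  rw [h2d, h2d', eS]
  linarith

theorem stmt_4 (d T : ℝ) (h1 : 1 / 4 ≤ d) (h2 : d ≤ 5 / 8) (hT : 5 / 7 ≤ T) :
    Efun T d / π ≤ (640 * d - 112) / (1536 * (3 * T - 1)) + 1 / 2 ^ 10 := by
  obtain ⟨x, hx⟩ : ∃ x, x = 2*d := ⟨_, rfl⟩
  have hd : d = x/2 := by linarith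
  have hx1 : 1/2 ≤ x := by linarith
  have hx2 : x ≤ 5/4 := by linarith
  have hx0 : 0 < x := by linarith
  have hT0 : 0 < T := by linarith
  have hTm : 0 < 3*T-1 := by linarith
  have hpi1 : 3.1415 < π := Real.pi_gt_d4
  have hpi2 : π < 3.1416 := Real.pi_lt_d4
  have hpi0 := Real.pi_pos
  have bch := chord T x hT hx1 hx2
  have E1 := end1 T hT
  have E2 := end2 T hT
  have hW : 0 ≤ WW T := by
    have q2 : 0 < (4*T^2+25)^2 - 25*(25/16) := by nlinarith [sq_nonneg T]
    have q3 : 0 < (4*T^2+81)^2 - 81*(25/16) := by nlinarith [sq_nonneg T]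
    have q4 : 0 < (4*T^2+169)^2 - 169*(25/16) := by nlinarith [sq_nonneg T]
    unfold WW
    positivity
  have hE := E_bound d x T hx hx1 hx2 hT
  have hch2 : x^2 ≤ (5/4-x)/(3/4)*(1/4) + (x-1/2)/(3/4)*(25/16) := by nlinarith
  have hl : 0 ≤ (5/4-x)/(3/4) := by apply div_nonneg <;> linarith
  have hm : 0 ≤ (x-1/2)/(3/4) := by apply div_nonneg <;> linarith
  have s1 := mul_le_mul_of_nonneg_left E1 hl
  have s2 := mul_le_mul_of_nonneg_left E2 hm
  have s3 := mul_le_mul_of_nonneg_right hch2 hW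
  have s4 := mul_le_mul_of_nonneg_left bch (show 0 ≤ 4*T by linarith)
  have hR : (5/4-x)/(3/4) * (31415/10000 * (48/(1536*(3*T-1)) + 1/1024))
      + (x-1/2)/(3/4) * (31415/10000 * (288/(1536*(3*T-1)) + 1/1024))
      = 31415/10000 * ((640 * d - 112) / (1536 * (3 * T - 1)) + 1 / 2 ^ 10) := by
    rw [hd]; field_simp; ring
  have hRpos : 0 ≤ (640 * d - 112) / (1536 * (3 * T - 1)) + 1 / 2 ^ 10 := by
    have : 0 ≤ 640*d-112 := by linarith
    positivity
  rw [div_le_iff₀ hpi0]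
  have hfin : Efun T d ≤ 31415/10000 * ((640 * d - 112) / (1536 * (3 * T - 1)) + 1 / 2 ^ 10) := by
    rw [← hR]
    linarith
  nlinarith
end

section
/- Let a, b ∈ {0, 1}, let k be a positive integer, and let s be a complex number that is not an integer. Then Γ(a/2 + (1−s)/2) / Γ(a/2 + s/2) = (Γ(b/2 + (1−(s+k))/2) / Γ(b/2 + (s+k)/2)) · 2^{−k} · (∏_{j=1}^{k} (s + j − 1)) · sin((π/2)(s + k + 1 − b)) / sin((π/2)(s + 1 − a)). -/
open Complex Real

theorem aux_G (s : ℂ) (hs : ∀ n : ℤ, s ≠ (n : ℂ)) (k : ℕ) :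
    Complex.Gamma ((s + k) / 2) * Complex.Gamma ((s + k + 1) / 2) =
      Complex.Gamma (s / 2) * Complex.Gamma ((s + 1) / 2) * (2 : ℂ) ^ (-(k : ℤ)) *
        (∏ j ∈ Finset.Icc 1 k, (s + (j : ℂ) - 1)) := by
  induction k with
  | zero => simp
  | succ k ih =>
    have h0 : (s + k) / 2 ≠ 0 := by
      intro h
      apply hs (-(k : ℤ))
      push_cast
      linear_combination 2 * h
    rw [Finset.prod_Icc_succ_top (by omega)]
    have e1 : (s + ((k + 1 : ℕ) : ℂ) + 1) / 2 = (s + k) / 2 + 1 := by push_cast; ring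
    have e2 : (s + ((k + 1 : ℕ) : ℂ)) / 2 = (s + k + 1) / 2 := by push_cast; ring
    have e3 : (2 : ℂ) ^ (-((k + 1 : ℕ) : ℤ)) = (2 : ℂ) ^ (-(k : ℤ)) / 2 := by
      rw [show -((k + 1 : ℕ) : ℤ) = -(k : ℤ) - 1 by push_cast; ring,
        zpow_sub_one₀ two_ne_zero]
      rfl
    rw [e1, e2, e3, Complex.Gamma_add_one _ h0]
    push_cast
    linear_combination (s + k) / 2 * ih

theorem aux_sin (a : ℝ) (ha : a = 0 ∨ a = 1) (s : ℂ) (hs : ∀ n : ℤ, s ≠ (n : ℂ)) :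
    Complex.sin ((π : ℂ) / 2 * (s + 1 - a)) ≠ 0 := by
  intro h
  rw [Complex.sin_eq_zero_iff] at h
  obtain ⟨n, hn⟩ := h
  have hpi : (π : ℂ) ≠ 0 := by exact_mod_cast Real.pi_ne_zero
  have h2 : s + 1 - a = 2 * n := by
    apply mul_left_cancel₀ hpi
    linear_combination 2 * hn
  rcases ha with rfl | rfl
  · apply hs (2 * n - 1)
    push_cast at h2 ⊢
    linear_combination h2
  · apply hs (2 * n)
    push_cast at h2 ⊢
    linear_combination h2

theorem aux_ne (s : ℂ) (hs : ∀ n : ℤ, s ≠ (n : ℂ)) (m : ℤ) :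
    Complex.Gamma ((s + m) / 2) ≠ 0 := by
  apply Complex.Gamma_ne_zero
  intro n h
  apply hs (-2 * n - m)
  push_cast
  linear_combination 2 * h

theorem aux_Q (a : ℝ) (ha : a = 0 ∨ a = 1) (s : ℂ) (hs : ∀ n : ℤ, s ≠ (n : ℂ)) :
    Complex.Gamma ((a : ℂ) / 2 + (1 - s) / 2) / Complex.Gamma ((a : ℂ) / 2 + s / 2) =
      π / (Complex.Gamma (s / 2) * Complex.Gamma ((s + 1) / 2)) /
        Complex.sin ((π : ℂ) / 2 * (s + 1 - a)) := by
  have hsin := aux_sin a ha s hs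
  have g0 : Complex.Gamma (s / 2) ≠ 0 := by simpa using aux_ne s hs 0
  have g1 : Complex.Gamma ((s + 1) / 2) ≠ 0 := by simpa using aux_ne s hs 1
  have hr := Complex.Gamma_mul_Gamma_one_sub ((s + 1 - a) / 2)
  rw [show (π : ℂ) * ((s + 1 - a) / 2) = (π : ℂ) / 2 * (s + 1 - a) by ring,
    show 1 - (s + 1 - (a : ℂ)) / 2 = (a : ℂ) / 2 + (1 - s) / 2 by ring,
    eq_div_iff hsin] at hr
  have hG : Complex.Gamma ((a : ℂ) / 2 + s / 2) * Complex.Gamma ((s + 1 - a) / 2) =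
      Complex.Gamma (s / 2) * Complex.Gamma ((s + 1) / 2) := by
    rcases ha with rfl | rfl
    · simp
    · rw [mul_comm]
      congr 2 <;> push_cast <;> ring
  have hne := mul_ne_zero g0 g1
  rw [← hG] at hne ⊢
  have n1 := left_ne_zero_of_mul hne
  have n2 := right_ne_zero_of_mul hne
  generalize Complex.sin ((π : ℂ) / 2 * (s + 1 - a)) = S at *
  generalize Complex.Gamma ((a : ℂ) / 2 + s / 2) = A at *
  generalize Complex.Gamma ((s + 1 - a) / 2) = B at *
  generalize Complex.Gamma ((a : ℂ) / 2 + (1 - s) / 2) = C at *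
  rw [← hr]
  field_simp

theorem stmt_12 (a b : ℝ) (ha : a = 0 ∨ a = 1) (hb : b = 0 ∨ b = 1)
    (k : ℕ) (hk : 0 < k) (s : ℂ) (hs : ∀ n : ℤ, s ≠ (n : ℂ)) :
    Complex.Gamma ((a : ℂ) / 2 + (1 - s) / 2) / Complex.Gamma ((a : ℂ) / 2 + s / 2) =
      Complex.Gamma ((b : ℂ) / 2 + (1 - (s + k)) / 2) /
          Complex.Gamma ((b : ℂ) / 2 + (s + k) / 2) *
        (2 : ℂ) ^ (-(k : ℤ)) *
        (∏ j ∈ Finset.Icc 1 k, (s + (j : ℂ) - 1)) *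
        Complex.sin ((π : ℂ) / 2 * (s + k + 1 - b)) /
        Complex.sin ((π : ℂ) / 2 * (s + 1 - a)) := by
  have hs' : ∀ n : ℤ, s + k ≠ (n : ℂ) := by
    intro n h
    apply hs (n - k)
    push_cast
    linear_combination h
  have g0 : Complex.Gamma ((s + k) / 2) ≠ 0 := by simpa using aux_ne (s + k) hs' 0
  have g1 : Complex.Gamma ((s + k + 1) / 2) ≠ 0 := by simpa using aux_ne (s + k) hs' 1
  have hne := mul_ne_zero g0 g1
  have hb' := aux_sin b hb (s + k) hs'
  rw [aux_Q a ha s hs, aux_Q b hb (s + k) hs']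
  rw [aux_G s hs k] at hne ⊢
  generalize Complex.sin ((π : ℂ) / 2 * (s + k + 1 - b)) = S at *
  generalize (∏ j ∈ Finset.Icc 1 k, (s + (j : ℂ) - 1)) = P at *
  generalize (2 : ℂ) ^ (-(k : ℤ)) = T at *
  generalize Complex.Gamma (s / 2) * Complex.Gamma ((s + 1) / 2) = G at *
  have n1 := right_ne_zero_of_mul hne
  have n2 := right_ne_zero_of_mul (left_ne_zero_of_mul hne)
  have n3 := left_ne_zero_of_mul (left_ne_zero_of_mul hne)
  congr 1
  field_simp
end
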